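/- Let 0 < ε < 1/2, let f : {0,1}^n → {0,1} be (r, γ)-robust with r ≥ 1 and n ≥ 64r, and let T be an ε-noisy boolean decision tree on n variables of depth at most (n/2) · log₂(n/(64r)) / log₂(1/ε). Then, for x uniform on {0,1}^n and over the internal noise of T, Pr[ T(x) = f(x) ] ≤ 1/2 + 1/8 + γ. -/

import Mathlib

/-- A boolean decision tree on `n` variables with leaves labeled by `L`:
internal nodes are labeled by a variable index and have two children
(child `0` and child `1`). -/
inductive NoisyTree (n : ℕ) (L : Type) : Type where
  | leaf : L → NoisyTree n L
  | node : Fin n → NoisyTree n L → NoisyTree n L → NoisyTree n L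

namespace NoisyTree

/-- Depth of a tree: maximum length of a root-to-leaf path. -/
def depth {n : ℕ} {L : Type} : NoisyTree n L → ℕ
  | .leaf _ => 0
  | .node _ t0 t1 => max (depth t0) (depth t1) + 1

/-- The leaf(-label) distribution of the `ε`-noisy computation of the tree on
input `x`: at a node labeled `i`, move to the child indexed by `x i ⊕ η` where
`η` is a fresh independent Bernoulli(`ε`) bit.  `leafDist ε t x l` is the
probability that the noisy computation reaches a leaf labeled `l`. -/
def leafDist {n : ℕ} {L : Type} [DecidableEq L] (ε : ℝ) :
    NoisyTree n L → (Fin n → Bool) → L → ℝ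
  | .leaf l, _, l' => if l' = l then 1 else 0
  | .node i t0 t1, x, l' =>
      (if x i then ε else 1 - ε) * leafDist ε t0 x l' +
      (if x i then 1 - ε else ε) * leafDist ε t1 x l'

end NoisyTree

/-- A deterministic boolean decision tree on `n` variables with leaves labeled
by `L`: at a node labeled `i` the true value of `x i` is read and the
computation branches on it. -/
inductive DetTree (n : ℕ) (L : Type) : Type where
  | leaf : L → DetTree n L
  | node : Fin n → DetTree n L → DetTree n L → DetTree n L

namespace DetTree

/-- The leaf label reached by the deterministic computation on input `x`. -/
def eval {n : ℕ} {L : Type} : DetTree n L → (Fin n → Bool) → L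
  | .leaf l, _ => l
  | .node i t0 t1, x => if x i then eval t1 x else eval t0 x

/-- The set of distinct variables queried by the deterministic computation on
input `x`. -/
def queried {n : ℕ} {L : Type} : DetTree n L → (Fin n → Bool) → Finset (Fin n)
  | .leaf _, _ => ∅
  | .node i t0 t1, x => insert i (if x i then queried t1 x else queried t0 x)

end DetTree

/-- `f : {0,1}^n → {0,1}` is `(r, γ)`-robust: on every subcube of dimension `r`
(given by a set `F` of `r` free coordinates and fixed values `a` outside `F`),
the fraction of points where `f = 1` lies in `[1/2 - γ, 1/2 + γ]`. -/
def Robust (n r : ℕ) (γ : ℝ) (f : (Fin n → Bool) → Bool) : Prop :=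
  ∀ F : Finset (Fin n), F.card = r → ∀ a : Fin n → Bool,
    1 / 2 - γ ≤
      ((Finset.univ.filter fun x : Fin n → Bool =>
          (∀ j ∉ F, x j = a j) ∧ f x = true).card : ℝ) / 2 ^ r ∧
    ((Finset.univ.filter fun x : Fin n → Bool =>
          (∀ j ∉ F, x j = a j) ∧ f x = true).card : ℝ) / 2 ^ r ≤ 1 / 2 + γ

open Finset in
lemma nt_card_fiber {n : ℕ} (F : Finset (Fin n)) (a : Fin n → Bool) :
    (Finset.univ.filter fun x : Fin n → Bool => ∀ j ∉ F, x j = a j).card = 2 ^ F.card := by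
  have h : (Finset.univ.filter fun x : Fin n → Bool => ∀ j ∉ F, x j = a j)
      = Fintype.piFinset (fun j => if j ∈ F then (Finset.univ : Finset Bool) else {a j}) := by
    ext x
    simp only [mem_filter, mem_univ, true_and, Fintype.mem_piFinset]
    refine forall_congr' fun j => ?_
    by_cases hj : j ∈ F <;> simp [hj]
  rw [h, Fintype.card_piFinset]
  have : ∀ j, (if j ∈ F then (Finset.univ : Finset Bool) else {a j}).card
      = if j ∈ F then 2 else 1 := by
    intro j
    by_cases hj : j ∈ F <;> simp [hj]
  simp only [this]
  rw [Finset.prod_ite]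
  simp

lemma nt_robust_count {n r : ℕ} {γ : ℝ} {f : (Fin n → Bool) → Bool} (hf : Robust n r γ f)
    (F : Finset (Fin n)) (hF : F.card = r) (a : Fin n → Bool) (l : Bool) :
    ((Finset.univ.filter fun x : Fin n → Bool =>
          (∀ j ∉ F, x j = a j) ∧ f x = l).card : ℝ) ≤ (1 / 2 + γ) * 2 ^ r := by
  obtain ⟨h1, h2⟩ := hf F hF a
  have hp : (0 : ℝ) < 2 ^ r := by positivity
  rw [div_le_iff₀ hp] at h2
  rw [le_div_iff₀ hp] at h1
  cases l with
  | true => exact h2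
  | false =>
    have h3 := nt_card_fiber F a
    rw [hF] at h3
    have h4 := Finset.card_filter_add_card_filter_not
      (s := Finset.univ.filter fun x : Fin n → Bool => ∀ j ∉ F, x j = a j) (fun x => f x = true)
    rw [h3, Finset.filter_filter, Finset.filter_filter] at h4
    simp only [Bool.not_eq_true] at h4
    have h5 : (((Finset.univ.filter fun x : Fin n → Bool =>
          (∀ j ∉ F, x j = a j) ∧ f x = true).card : ℝ)) + ((Finset.univ.filter fun x : Fin n → Bool =>
          (∀ j ∉ F, x j = a j) ∧ f x = false).card : ℝ) = 2 ^ r := by exact_mod_cast h4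
    nlinarith

lemma nt_robust_sum {n r : ℕ} {γ : ℝ} {f : (Fin n → Bool) → Bool} (hf : Robust n r γ f)
    (F : Finset (Fin n)) (hF : F.card = r) (l : Bool) (g : (Fin n → Bool) → ℝ)
    (hg : ∀ x, 0 ≤ g x) (hgF : ∀ x y, (∀ j ∉ F, x j = y j) → g x = g y) :
    ∑ x, (if f x = l then g x else 0) ≤ (1 / 2 + γ) * ∑ x, g x := by
  have hp : (0 : ℝ) < 2 ^ r := by positivity
  refine le_of_mul_le_mul_left ?_ hp
  have e1 : (2 : ℝ) ^ r * ∑ x, (if f x = l then g x else 0)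
      = ∑ x, ∑ a, (if (∀ j ∉ F, x j = a j) ∧ f x = l then g a else 0) := by
    rw [Finset.mul_sum]
    refine Finset.sum_congr rfl fun x _ => ?_
    by_cases hx : f x = l
    · simp only [hx, if_true, and_true]
      have h3 := nt_card_fiber F x
      rw [hF] at h3
      have : ∀ a : Fin n → Bool, (if (∀ j ∉ F, x j = a j) then g a else 0)
          = if (∀ j ∉ F, a j = x j) then g x else 0 := by
        intro a
        by_cases h : ∀ j ∉ F, x j = a j
        · rw [if_pos h, if_pos (fun j hj => (h j hj).symm), hgF x a h]
        · rw [if_neg h, if_neg (fun h' => h fun j hj => (h' j hj).symm)]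
      simp only [this]
      rw [← Finset.sum_filter, Finset.sum_const, h3]
      simp
    · simp [hx]
  rw [e1, Finset.sum_comm, Finset.mul_sum, Finset.mul_sum]
  refine Finset.sum_le_sum fun a _ => ?_
  rw [← Finset.sum_filter, Finset.sum_const, nsmul_eq_mul]
  have := mul_le_mul_of_nonneg_right (nt_robust_count hf F hF a l) (hg a)
  linarith

lemma nt_gamma_nonneg {n r : ℕ} {γ : ℝ} {f : (Fin n → Bool) → Bool} (hf : Robust n r γ f)
    (hrn : r ≤ n) : 0 ≤ γ := by
  obtain ⟨F, -, hF⟩ := Finset.exists_subset_card_eq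
    (s := (Finset.univ : Finset (Fin n))) (n := r) (by simpa using hrn)
  have := hf F hF (fun _ => false)
  linarith [this.1, this.2]

lemma nt_exp_bound (r : ℕ) (hr : 1 ≤ r) : (2 : ℝ) ^ r * Real.exp (-(16 * r)) ≤ 1 / 8 := by
  have h1 : Real.exp (-(16 * (r : ℝ))) = (Real.exp (-16)) ^ r := by
    rw [← Real.exp_nat_mul]; congr 1; ring
  rw [h1, ← mul_pow]
  have h2 : Real.exp (-16) ≤ 1 / 16 := by
    rw [Real.exp_neg, one_div]
    refine inv_anti₀ (by norm_num) ?_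
    linarith [Real.add_one_le_exp (16 : ℝ)]
  have h3 : 0 ≤ 2 * Real.exp (-16) := by positivity
  calc (2 * Real.exp (-16)) ^ r ≤ (1 / 8) ^ r := by
        apply pow_le_pow_left₀ h3; linarith
    _ ≤ 1 / 8 := pow_le_of_le_one (by norm_num) (by norm_num) (by omega)

lemma nt_sum_prod {n : ℕ} (w : Fin n → Bool → ℝ) :
    ∑ x : Fin n → Bool, ∏ i, w i (x i) = ∏ i, (w i true + w i false) := by
  rw [← Fintype.piFinset_univ, ← Finset.prod_univ_sum]
  simp

/-- The leaf bound: product weights with many coordinates being sufficiently mixed. -/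
lemma nt_leaf {n r : ℕ} {γ : ℝ} {f : (Fin n → Bool) → Bool} (hf : Robust n r γ f)
    (hr : 1 ≤ r) (hrn : r ≤ n) (w : Fin n → Bool → ℝ) (δ : Fin n → ℝ)
    (hδ0 : ∀ i, 0 ≤ δ i) (hw0 : ∀ i b, 0 ≤ w i b)
    (hw : ∀ i b, δ i * ((w i true + w i false) / 2) ≤ w i b)
    (hsum : 32 * (r : ℝ) ≤ ∑ i, δ i) (hδ1 : ∀ i, δ i ≤ 1) (l : Bool) :
    ∑ x, (∏ i, w i (x i)) * (if f x = l then 1 else 0)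
      ≤ (1 / 2 + 1 / 8 + γ) * ∑ x : Fin n → Bool, ∏ i, w i (x i) := by
  classical
  have hγ := nt_gamma_nonneg hf hrn
  set S : Fin n → ℝ := fun i => w i true + w i false with hS
  have hS0 : ∀ i, 0 ≤ S i := fun i => add_nonneg (hw0 i _) (hw0 i _)
  set u : Fin n → ℝ := fun i => δ i * (S i / 2) with hu
  have hu0 : ∀ i, 0 ≤ u i := fun i => mul_nonneg (hδ0 i) (by linarith [hS0 i])
  set v : Fin n → Bool → ℝ := fun i b => w i b - u i with hv
  have hv0 : ∀ i b, 0 ≤ v i b := fun i b => sub_nonneg.2 (hw i b)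
  set g : Finset (Fin n) → (Fin n → Bool) → ℝ :=
    fun A x => (∏ i ∈ A, u i) * ∏ i ∈ Finset.univ \ A, v i (x i) with hg
  have hg0 : ∀ A x, 0 ≤ g A x := fun A x =>
    mul_nonneg (Finset.prod_nonneg fun i _ => hu0 i) (Finset.prod_nonneg fun i _ => hv0 i _)
  have hexp : ∀ x : Fin n → Bool, ∏ i, w i (x i) = ∑ A ∈ Finset.univ.powerset, g A x := by
    intro x
    rw [← Finset.prod_add]
    refine Finset.prod_congr rfl fun i _ => ?_
    simp [hv]
  have hgs : ∀ A, ∑ x, g A x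
      = (∏ i ∈ A, (2 * u i)) * ∏ i ∈ Finset.univ \ A, (v i true + v i false) := by
    intro A
    have := nt_sum_prod (fun i b => if i ∈ A then u i else v i b)
    have e : ∀ F : Fin n → ℝ, ∀ G : Fin n → ℝ, ∏ i, (if i ∈ A then F i else G i)
        = (∏ i ∈ A, F i) * ∏ i ∈ Finset.univ \ A, G i := by
      intro F G
      rw [Finset.prod_ite]
      congr 1
      · simp
      · congr 1; ext; simp
    simp only [e] at this
    rw [show (∑ x, g A x) = ∑ x : Fin n → Bool,
      (∏ i ∈ A, u i) * ∏ i ∈ Finset.univ \ A, v i (x i) from rfl, this, ← e]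
    refine Finset.prod_congr rfl fun i _ => ?_
    split_ifs <;> ring
  set P : ℝ := ∏ i, S i with hP
  have hP0 : 0 ≤ P := Finset.prod_nonneg fun i _ => hS0 i
  have htot : ∑ A ∈ Finset.univ.powerset, ∑ x, g A x = P := by
    rw [Finset.sum_comm]
    refine Eq.trans ?_ (nt_sum_prod w)
    exact Finset.sum_congr rfl fun x _ => (hexp x).symm
  -- tail
  have htail : ∑ A ∈ Finset.univ.powerset, (if A.card < r then ∑ x, g A x else 0)
      ≤ 1 / 8 * P := by
    have h1 : ∑ A ∈ Finset.univ.powerset, (if A.card < r then ∑ x, g A x else 0)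
        ≤ ∑ A ∈ Finset.univ.powerset, (2 : ℝ) ^ r *
          ((∏ i ∈ A, u i) * ∏ i ∈ Finset.univ \ A, (v i true + v i false)) := by
      refine Finset.sum_le_sum fun A _ => ?_
      have hnn : 0 ≤ (∏ i ∈ A, u i) * ∏ i ∈ Finset.univ \ A, (v i true + v i false) :=
        mul_nonneg (Finset.prod_nonneg fun i _ => hu0 i)
          (Finset.prod_nonneg fun i _ => add_nonneg (hv0 i _) (hv0 i _))
      split_ifs with hA
      · rw [hgs, Finset.prod_mul_distrib, Finset.prod_const, mul_assoc]
        refine mul_le_mul_of_nonneg_right ?_ hnn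
        exact pow_le_pow_right₀ (by norm_num) hA.le
      · positivity
    refine h1.trans ?_
    rw [← Finset.mul_sum, ← Finset.prod_add]
    have h2 : ∏ i, (u i + (v i true + v i false)) ≤ ∏ i, (S i * Real.exp (-(δ i / 2))) := by
      refine Finset.prod_le_prod
        (fun i _ => add_nonneg (hu0 i) (add_nonneg (hv0 i _) (hv0 i _))) fun i _ => ?_
      have : u i + (v i true + v i false) = S i * (1 - δ i / 2) := by
        simp only [hv, hu, hS]; ring
      rw [this]
      refine mul_le_mul_of_nonneg_left ?_ (hS0 i)
      linarith [Real.add_one_le_exp (-(δ i / 2))]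
    rw [Finset.prod_mul_distrib, ← Real.exp_sum] at h2
    have h3 : Real.exp (∑ i, -(δ i / 2)) ≤ Real.exp (-(16 * r)) := by
      apply Real.exp_le_exp.2
      rw [Finset.sum_neg_distrib, ← Finset.sum_div]
      linarith
    have h4 := nt_exp_bound r hr
    calc (2 : ℝ) ^ r * ∏ i, (u i + (v i true + v i false))
        ≤ 2 ^ r * (P * Real.exp (-(16 * r))) := by
          refine mul_le_mul_of_nonneg_left ?_ (by positivity)
          exact h2.trans (mul_le_mul_of_nonneg_left h3 hP0)
      _ = (2 ^ r * Real.exp (-(16 * r))) * P := by ring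
      _ ≤ 1 / 8 * P := mul_le_mul_of_nonneg_right h4 hP0
  have hmain : ∀ A : Finset (Fin n), ∑ x, (if f x = l then g A x else 0)
      ≤ (1 / 2 + γ) * (∑ x, g A x) + (if A.card < r then ∑ x, g A x else 0) := by
    intro A
    have hs0 : 0 ≤ ∑ x, g A x := Finset.sum_nonneg fun x _ => hg0 A x
    split_ifs with hA
    · have : ∑ x, (if f x = l then g A x else 0) ≤ ∑ x, g A x := by
        refine Finset.sum_le_sum fun x _ => ?_
        split_ifs
        · exact le_rfl
        · exact hg0 A x
      nlinarith
    · obtain ⟨F, hFA, hF⟩ := Finset.exists_subset_card_eq (not_lt.1 hA)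
      rw [add_zero]
      refine nt_robust_sum hf F hF l (g A) (hg0 A) fun x y hxy => ?_
      simp only [hg]
      congr 1
      refine Finset.prod_congr rfl fun i hi => ?_
      rw [hxy i fun h => (Finset.mem_sdiff.1 hi).2 (hFA h)]
  have hL : ∑ x, (∏ i, w i (x i)) * (if f x = l then 1 else 0)
      = ∑ A ∈ Finset.univ.powerset, ∑ x, (if f x = l then g A x else 0) := by
    rw [Finset.sum_comm]
    refine Finset.sum_congr rfl fun x _ => ?_
    rw [hexp]
    split_ifs <;> simp
  rw [hL, nt_sum_prod]
  calc _ ≤ ∑ A ∈ Finset.univ.powerset, ((1 / 2 + γ) * (∑ x, g A x)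
        + (if A.card < r then ∑ x, g A x else 0)) := Finset.sum_le_sum fun A _ => hmain A
    _ ≤ (1 / 2 + γ) * P + 1 / 8 * P := by
        rw [Finset.sum_add_distrib, ← Finset.mul_sum, htot]
        linarith
    _ = _ := by ring

/-- Induction over the tree, given a bound at every leaf. -/
lemma nt_induct {n : ℕ} {ε B D : ℝ} (hε0 : 0 < ε) (hε1 : ε < 1 / 2)
    (f : (Fin n → Bool) → Bool)
    (hleaf : ∀ (w : Fin n → Bool → ℝ) (c : Fin n → ℕ), (∀ i b, 0 ≤ w i b) →
      (∀ i b, ε ^ c i * ((w i true + w i false) / 2) ≤ w i b) → ∑ i, (c i : ℝ) ≤ D → ∀ l : Bool,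
      ∑ x, (∏ i, w i (x i)) * (if f x = l then 1 else 0)
        ≤ B * ∑ x : Fin n → Bool, ∏ i, w i (x i))
    (T : NoisyTree n Bool) : ∀ (w : Fin n → Bool → ℝ) (c : Fin n → ℕ), (∀ i b, 0 ≤ w i b) →
      (∀ i b, ε ^ c i * ((w i true + w i false) / 2) ≤ w i b) →
      ∑ i, (c i : ℝ) + T.depth ≤ D →
      ∑ x, (∏ i, w i (x i)) * T.leafDist ε x (f x)
        ≤ B * ∑ x : Fin n → Bool, ∏ i, w i (x i) := by
  have key : ∀ (i : Fin n) (α : Bool → ℝ), (∀ b, ε ≤ α b) → (∀ b, α b ≤ 1) →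
      ∀ (t : NoisyTree n Bool), (∀ (w : Fin n → Bool → ℝ) (c : Fin n → ℕ), (∀ i b, 0 ≤ w i b) →
      (∀ i b, ε ^ c i * ((w i true + w i false) / 2) ≤ w i b) →
      ∑ i, (c i : ℝ) + t.depth ≤ D →
      ∑ x, (∏ i, w i (x i)) * t.leafDist ε x (f x)
        ≤ B * ∑ x : Fin n → Bool, ∏ i, w i (x i)) →
      ∀ (w : Fin n → Bool → ℝ) (c : Fin n → ℕ), (∀ i b, 0 ≤ w i b) →
      (∀ i b, ε ^ c i * ((w i true + w i false) / 2) ≤ w i b) →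
      ∑ i, (c i : ℝ) + (t.depth + 1) ≤ D →
      ∑ x, ((∏ i, w i (x i)) * α (x i)) * t.leafDist ε x (f x)
        ≤ B * ∑ x : Fin n → Bool, (∏ i, w i (x i)) * α (x i) := by
    intro i α hα0 hα1 t ih w c hw0 hw hc
    have hpos : ∀ b, 0 ≤ α b := fun b => hε0.le.trans (hα0 b)
    have := ih (fun j b => w j b * (if j = i then α b else 1))
      (fun j => c j + if j = i then 1 else 0) ?_ ?_ ?_
    · simp only [Finset.prod_mul_distrib, Finset.prod_ite_eq', Finset.mem_univ, if_true] at this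
      exact this
    · intro j b
      split_ifs
      · exact mul_nonneg (hw0 _ _) (hpos b)
      · simpa using hw0 j b
    · intro j b
      split_ifs
      · rw [pow_succ]
        have h1 := mul_le_mul_of_nonneg_right (hw j b) hε0.le
        have h2 := mul_le_mul_of_nonneg_left (hα0 b) (hw0 j b)
        have h3 := mul_le_mul_of_nonneg_left (hα1 true) (hw0 j true)
        have h4 := mul_le_mul_of_nonneg_left (hα1 false) (hw0 j false)
        have h5 : (0 : ℝ) ≤ ε ^ c j * ε := by positivity
        have h6 := mul_le_mul_of_nonneg_left
          (show (w j true * α true + w j false * α false) / 2 ≤ (w j true + w j false) / 2 by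
            linarith) h5
        linarith
      · simpa using hw j b
    · push_cast
      rw [Finset.sum_add_distrib]
      simp
      linarith
  induction T with
  | leaf l =>
    intro w c hw0 hw hc
    simpa [NoisyTree.leafDist] using
      hleaf w c hw0 hw (by simpa [NoisyTree.depth] using hc) l
  | node i t0 t1 ih0 ih1 =>
    intro w c hw0 hw hc
    simp only [NoisyTree.depth] at hc
    push_cast at hc
    have k0 := key i (fun b => if b then ε else 1 - ε) (by intro b; cases b <;> simp; linarith)
      (by intro b; cases b <;> simp <;> linarith) t0 ih0 w c hw0 hw
      (by linarith [le_max_left (t0.depth : ℝ) t1.depth])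
    have k1 := key i (fun b => if b then 1 - ε else ε) (by intro b; cases b <;> simp; linarith)
      (by intro b; cases b <;> simp <;> linarith) t1 ih1 w c hw0 hw
      (by linarith [le_max_right (t0.depth : ℝ) t1.depth])
    have e : ∀ x : Fin n → Bool, ∏ i, w i (x i) =
        (∏ i, w i (x i)) * (if x i then ε else 1 - ε) +
        (∏ i, w i (x i)) * (if x i then 1 - ε else ε) := by
      intro x
      split_ifs <;> ring
    have e2 : ∑ x : Fin n → Bool, ∏ i, w i (x i) =
        ∑ x : Fin n → Bool, (∏ i, w i (x i)) * (if x i then ε else 1 - ε) +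
        ∑ x : Fin n → Bool, (∏ i, w i (x i)) * (if x i then 1 - ε else ε) := by
      rw [← Finset.sum_add_distrib]
      exact Finset.sum_congr rfl fun x _ => e x
    rw [e2, mul_add]
    refine le_trans (le_of_eq ?_) (add_le_add k0 k1)
    rw [← Finset.sum_add_distrib]
    refine Finset.sum_congr rfl fun x _ => ?_
    simp only [NoisyTree.leafDist]
    ring

/-- If `f` is `(r, γ)`-robust with `1 ≤ r` and `n ≥ 64r`, and `T` is an `ε`-noisy
boolean decision tree (leaves labeled by output bits) of depth at most
`(n/2) · log₂(n/(64r)) / log₂(1/ε)`, then for `x` uniform on `{0,1}^n` and over the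
internal noise of `T`, `Pr[T(x) = f(x)] ≤ 1/2 + 1/8 + γ`. -/
theorem noisy_tree_error_on_robust {n r : ℕ} (ε γ : ℝ)
    (hε0 : 0 < ε) (hε1 : ε < 1 / 2) (hr : 1 ≤ r) (hn : 64 * r ≤ n)
    (f : (Fin n → Bool) → Bool) (hf : Robust n r γ f)
    (T : NoisyTree n Bool)
    (hdepth : (T.depth : ℝ) ≤
      ((n : ℝ) / 2) * Real.logb 2 ((n : ℝ) / (64 * r)) / Real.logb 2 (1 / ε)) :
    (1 / 2 ^ n) * ∑ x : Fin n → Bool, T.leafDist ε x (f x) ≤ 1 / 2 + 1 / 8 + γ := by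
  have hr' : (1 : ℝ) ≤ r := by exact_mod_cast hr
  have hn' : 64 * (r : ℝ) ≤ n := by exact_mod_cast hn
  have hn0 : (0 : ℝ) < n := by linarith
  have hrp : (0 : ℝ) < 64 * r := by linarith
  have hL : 0 < Real.logb 2 (1 / ε) := by
    apply Real.logb_pos (by norm_num)
    rw [lt_div_iff₀ hε0]; linarith
  set K : ℝ := Real.logb 2 ((n : ℝ) / (64 * r)) / Real.logb 2 (1 / ε) with hK
  have hK0 : 0 ≤ K := by
    apply div_nonneg _ hL.le
    apply Real.logb_nonneg (by norm_num)
    rw [le_div_iff₀ hrp]; linarith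
  have hKε : ∀ c : ℕ, (c : ℝ) ≤ K → 64 * (r : ℝ) / n ≤ ε ^ c := by
    intro c hc
    rw [hK, le_div_iff₀ hL, ← Real.logb_pow] at hc
    rw [Real.logb_le_logb (by norm_num) (by positivity) (by positivity)] at hc
    have := one_div_le_one_div_of_le (by positivity) hc
    simpa using this
  have hd : (T.depth : ℝ) ≤ (n : ℝ) / 2 * K := by
    rw [hK, ← mul_div_assoc]; exact hdepth
  have hδn : 64 * (r : ℝ) / n ≤ 1 := by rw [div_le_one hn0]; exact hn'
  have hδp : 0 ≤ 64 * (r : ℝ) / n := by positivity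
  have main := nt_induct (B := 1 / 2 + 1 / 8 + γ) (D := (n : ℝ) / 2 * K) hε0 hε1 f ?_ T
    (fun _ _ => 1) (fun _ => 0) (by intros; norm_num) (by intros; norm_num) (by simpa using hd)
  · have hp : (0 : ℝ) < 2 ^ n := by positivity
    rw [one_div, inv_mul_le_iff₀ hp]
    simp only [Finset.prod_const_one, one_mul, Finset.sum_const, Finset.card_univ,
      Fintype.card_pi, Fintype.card_bool, Finset.prod_const, Fintype.card_fin,
      nsmul_eq_mul, mul_one] at main
    push_cast at main
    linarith
  · intro w c hw0 hw hc l
    refine nt_leaf hf hr (by omega) w (fun i => if (c i : ℝ) ≤ K then 64 * (r : ℝ) / n else 0)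
      ?_ hw0 ?_ ?_ ?_ l
    · intro i
      split_ifs <;> linarith
    · intro i b
      split_ifs with h
      · refine le_trans (mul_le_mul_of_nonneg_right (hKε _ h) ?_) (hw i b)
        linarith [hw0 i true, hw0 i false]
      · simpa using hw0 i b
    · rw [← Finset.sum_filter, Finset.sum_const, nsmul_eq_mul]
      set G := Finset.univ.filter fun i : Fin n => (c i : ℝ) ≤ K with hG
      have hcard : (n : ℝ) / 2 ≤ G.card := by
        have h1 : (G.card : ℝ) + ((Finset.univ.filter fun i : Fin n => ¬ (c i : ℝ) ≤ K).card : ℝ)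
            = n := by
          have := Finset.card_filter_add_card_filter_not
            (s := (Finset.univ : Finset (Fin n))) (fun i => (c i : ℝ) ≤ K)
          rw [Finset.card_univ, Fintype.card_fin] at this
          exact_mod_cast this
        set H := Finset.univ.filter fun i : Fin n => ¬ (c i : ℝ) ≤ K with hH
        have hHs : ∑ i ∈ H, (c i : ℝ) ≤ ∑ i, (c i : ℝ) :=
          Finset.sum_le_sum_of_subset_of_nonneg (Finset.subset_univ _)
            fun i _ _ => Nat.cast_nonneg _
        by_contra hlt
        have hHc : (n : ℝ) / 2 < H.card := by linarith
        have hne : H.Nonempty := by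
          rw [← Finset.card_pos]
          have : (0 : ℝ) < H.card := by linarith
          exact_mod_cast this
        have h2 : ∑ i ∈ H, K < ∑ i ∈ H, (c i : ℝ) := by
          refine Finset.sum_lt_sum_of_nonempty hne fun i hi => ?_
          exact not_le.1 (Finset.mem_filter.1 hi).2
        rw [Finset.sum_const, nsmul_eq_mul] at h2
        have h3 := mul_le_mul_of_nonneg_right hHc.le hK0
        linarith
      have := mul_le_mul_of_nonneg_right hcard hδp
      refine le_trans (le_of_eq ?_) this
      field_simp
      norm_num
    · intro i
      split_ifs <;> linarith
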